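/- arXiv:1409.6445 — 5 statements merged into one kernel-verified Lean document; each statement's English description precedes it below -/
import Mathlib

section
/- Let N ≥ 2 be finite and let Q = (q_ij) be an irreducible conservative Q-matrix on S = {1,…,N} with (unique) stationary distribution μ = (μ_1,…,μ_N). Let β = (β_1,…,β_N) ∈ ℝ^N satisfy the averaging condition Σ_{i=1}^N μ_i β_i < 0 and max_{i∈S} β_i ≤ 0. Then for every p > 0 one has η_p > 0, where η_p := −max{Re γ : γ is a (complex) eigenvalue of Q_p} and Q_p := Q + (p/2)·diag(β_1,…,β_N). -/
/-- `Q` has nonnegative off-diagonal entries and every row sums to zero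
(a conservative Q-matrix). -/
def IsConservativeQMatrix {N : ℕ} (Q : Matrix (Fin N) (Fin N) ℝ) : Prop :=
  (∀ i j, i ≠ j → 0 ≤ Q i j) ∧ ∀ i, ∑ j, Q i j = 0

/-- Irreducibility: any two distinct states are connected by a finite chain of
transitions with strictly positive rates. -/
def MatrixIrreducible {N : ℕ} (Q : Matrix (Fin N) (Fin N) ℝ) : Prop :=
  ∀ i j : Fin N, i ≠ j → ∃ (k : ℕ) (c : ℕ → Fin N),
    c 0 = i ∧ c k = j ∧ ∀ l < k, 0 < Q (c l) (c (l + 1))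

/-- The set of real parts of the (complex) eigenvalues of a real matrix. -/
def spectrumRe {N : ℕ} (M : Matrix (Fin N) (Fin N) ℝ) : Set ℝ :=
  {x : ℝ | ∃ γ ∈ spectrum ℂ (M.map Complex.ofReal), γ.re = x}

/-! Row `i` of `Q_p` sums to `(p / 2) β i ≤ 0` and its off-diagonal entries are nonnegative. Hence,
for `Re γ ≥ 0`, the matrix `γ - Q_p` is diagonally dominant, strictly so in the rows with `β i < 0`,
and irreducibility lets every state reach such a row. By Taussky's argument a matrix of this kind is
nonsingular: for a vector in its kernel, the set of coordinates of maximal modulus is closed under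
the transitions, so it contains a strictly dominant row, and there the coordinate must vanish. -/

open Finset Matrix Relation

section WeaklyChained

variable {K n : Type*} [NormedField K] [Fintype n] [DecidableEq n] {B : Matrix n n K}
  {v : n → K} {i j : n}

theorem norm_diag_mul_le_of_mulVec_apply_eq_zero (h : (B *ᵥ v) i = 0) :
    ‖B i i‖ * ‖v i‖ ≤ ∑ j ∈ univ.erase i, ‖B i j‖ * ‖v j‖ := by
  have hdiag : B i i * v i = -∑ j ∈ univ.erase i, B i j * v j := by
    rw [eq_neg_iff_add_eq_zero, add_sum_erase univ (fun j => B i j * v j) (mem_univ i)]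
    exact h
  calc ‖B i i‖ * ‖v i‖ = ‖∑ j ∈ univ.erase i, B i j * v j‖ := by rw [← norm_mul, hdiag, norm_neg]
    _ ≤ ∑ j ∈ univ.erase i, ‖B i j * v j‖ := norm_sum_le _ _
    _ = ∑ j ∈ univ.erase i, ‖B i j‖ * ‖v j‖ := by simp only [norm_mul]

theorem sum_norm_mul_norm_sub_le_of_mulVec_apply_eq_zero (h : (B *ᵥ v) i = 0) :
    ∑ j ∈ univ.erase i, ‖B i j‖ * (‖v i‖ - ‖v j‖) ≤
      (∑ j ∈ univ.erase i, ‖B i j‖ - ‖B i i‖) * ‖v i‖ := by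
  simp only [mul_sub, sum_sub_distrib, sub_mul, sum_mul]
  exact sub_le_sub_left (norm_diag_mul_le_of_mulVec_apply_eq_zero h) _

theorem norm_eq_of_mulVec_apply_eq_zero_of_forall_norm_le (h : (B *ᵥ v) i = 0)
    (hmax : ∀ k, ‖v k‖ ≤ ‖v i‖) (hdom : ∑ k ∈ univ.erase i, ‖B i k‖ ≤ ‖B i i‖)
    (hij : B i j ≠ 0) : ‖v j‖ = ‖v i‖ := by
  obtain rfl | hji := eq_or_ne j i
  · rfl
  by_contra hne
  have hgap : 0 < ‖B i j‖ * (‖v i‖ - ‖v j‖) :=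
    mul_pos (norm_pos_iff.mpr hij) (sub_pos.mpr ((hmax j).lt_of_ne hne))
  have hpos : 0 < ∑ k ∈ univ.erase i, ‖B i k‖ * (‖v i‖ - ‖v k‖) :=
    sum_pos' (fun k _ => mul_nonneg (norm_nonneg _) (sub_nonneg.mpr (hmax k)))
      ⟨j, mem_erase.mpr ⟨hji, mem_univ j⟩, hgap⟩
  have hnonpos : (∑ k ∈ univ.erase i, ‖B i k‖ - ‖B i i‖) * ‖v i‖ ≤ 0 :=
    mul_nonpos_of_nonpos_of_nonneg (sub_nonpos.mpr hdom) (norm_nonneg _)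
  linarith [sum_norm_mul_norm_sub_le_of_mulVec_apply_eq_zero h]

theorem eq_zero_of_mulVec_apply_eq_zero_of_forall_norm_le (h : (B *ᵥ v) i = 0)
    (hmax : ∀ k, ‖v k‖ ≤ ‖v i‖) (hdom : ∑ k ∈ univ.erase i, ‖B i k‖ < ‖B i i‖) : v i = 0 := by
  by_contra hne
  have hnonneg : 0 ≤ ∑ k ∈ univ.erase i, ‖B i k‖ * (‖v i‖ - ‖v k‖) :=
    sum_nonneg fun k _ => mul_nonneg (norm_nonneg _) (sub_nonneg.mpr (hmax k))
  have hneg : (∑ k ∈ univ.erase i, ‖B i k‖ - ‖B i i‖) * ‖v i‖ < 0 :=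
    mul_neg_of_neg_of_pos (sub_neg.mpr hdom) (norm_pos_iff.mpr hne)
  linarith [sum_norm_mul_norm_sub_le_of_mulVec_apply_eq_zero h]

/-- A weakly chained diagonally dominant matrix: every row is weakly diagonally dominant, and from
every index a path in the directed graph of nonzero entries leads to a strictly dominant row. The
graph includes the loops coming from nonzero diagonal entries; they do not affect reachability. -/
structure IsWeaklyChainedDiagDominant (B : Matrix n n K) : Prop where
  sum_le_diag : ∀ i, ∑ j ∈ univ.erase i, ‖B i j‖ ≤ ‖B i i‖
  exists_reflTransGen_sum_lt_diag : ∀ i, ∃ j, ReflTransGen (fun k l => B k l ≠ 0) i j ∧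
    ∑ l ∈ univ.erase j, ‖B j l‖ < ‖B j j‖

namespace IsWeaklyChainedDiagDominant

theorem norm_eq_of_reflTransGen (hB : IsWeaklyChainedDiagDominant B) (hv : B *ᵥ v = 0)
    (hmax : ∀ k, ‖v k‖ ≤ ‖v i‖) (hij : ReflTransGen (fun k l => B k l ≠ 0) i j) :
    ‖v j‖ = ‖v i‖ := by
  induction hij with
  | refl => rfl
  | @tail k l _ hkl ih =>
    have hmax' : ∀ m, ‖v m‖ ≤ ‖v k‖ := fun m => (hmax m).trans ih.ge
    exact (norm_eq_of_mulVec_apply_eq_zero_of_forall_norm_le (congrFun hv k) hmax'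
      (hB.sum_le_diag k) hkl).trans ih

theorem eq_zero_of_mulVec_eq_zero (hB : IsWeaklyChainedDiagDominant B) (hv : B *ᵥ v = 0) :
    v = 0 := by
  cases isEmpty_or_nonempty n
  · exact Subsingleton.elim _ _
  obtain ⟨i, hmax⟩ := Finite.exists_max fun k => ‖v k‖
  obtain ⟨j, hij, hdom⟩ := hB.exists_reflTransGen_sum_lt_diag i
  have hji : ‖v j‖ = ‖v i‖ := hB.norm_eq_of_reflTransGen hv hmax hij
  have hj : v j = 0 := eq_zero_of_mulVec_apply_eq_zero_of_forall_norm_le (congrFun hv j)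
    (fun k => (hmax k).trans hji.ge) hdom
  ext k
  exact norm_le_zero_iff.mp ((hmax k).trans_eq (by rw [← hji, hj, norm_zero]))

theorem det_ne_zero (hB : IsWeaklyChainedDiagDominant B) : B.det ≠ 0 := fun hdet =>
  have ⟨_, hv0, hv⟩ := exists_mulVec_eq_zero_iff.mpr hdet
  hv0 (hB.eq_zero_of_mulVec_eq_zero hv)

end IsWeaklyChainedDiagDominant

end WeaklyChained

theorem reflTransGen_mono_of_ne {α : Type*} {r s : α → α → Prop} {a b : α}
    (hrs : ∀ x y, x ≠ y → r x y → s x y) (hab : ReflTransGen r a b) : ReflTransGen s a b :=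
  hab.lift' id fun x y hxy =>
    (eq_or_ne x y).elim (fun h => h ▸ .refl) fun h => .single (hrs x y h hxy)

section NonnegOffDiag

variable {n : Type*} [Fintype n] [DecidableEq n] {A : Matrix n n ℝ} {γ : ℂ}

theorem sum_norm_algebraMap_sub_map_le {i : n} (hoff : ∀ j, i ≠ j → 0 ≤ A i j) (hγ : 0 ≤ γ.re) :
    ∑ j ∈ univ.erase i, ‖(algebraMap ℂ (Matrix n n ℂ) γ - A.map Complex.ofReal) i j‖ ≤
      ‖(algebraMap ℂ (Matrix n n ℂ) γ - A.map Complex.ofReal) i i‖ + ∑ j, A i j := by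
  have hsum : ∑ j ∈ univ.erase i, ‖(algebraMap ℂ (Matrix n n ℂ) γ - A.map Complex.ofReal) i j‖ =
      ∑ j ∈ univ.erase i, A i j := by
    refine sum_congr rfl fun j hj => ?_
    have hij : i ≠ j := (ne_of_mem_erase hj).symm
    simp [algebraMap_matrix_apply, hij, abs_of_nonneg (hoff j hij)]
  have hdiag : -A i i ≤ ‖(algebraMap ℂ (Matrix n n ℂ) γ - A.map Complex.ofReal) i i‖ :=
    calc -A i i ≤ (γ - A i i : ℂ).re := by simpa using hγ
      _ ≤ ‖(γ - A i i : ℂ)‖ := Complex.re_le_norm _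
      _ = _ := by simp [algebraMap_matrix_apply]
  linarith [add_sum_erase univ (A i) (mem_univ i)]

theorem isWeaklyChainedDiagDominant_algebraMap_sub_map (hoff : ∀ i j, i ≠ j → 0 ≤ A i j)
    (hrow : ∀ i, ∑ j, A i j ≤ 0)
    (hreach : ∀ i, ∃ j, ReflTransGen (fun k l => 0 < A k l) i j ∧ ∑ l, A j l < 0)
    (hγ : 0 ≤ γ.re) :
    IsWeaklyChainedDiagDominant (algebraMap ℂ (Matrix n n ℂ) γ - A.map Complex.ofReal) where
  sum_le_diag i := by linarith [sum_norm_algebraMap_sub_map_le (hoff i) hγ, hrow i]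
  exists_reflTransGen_sum_lt_diag i := by
    obtain ⟨j, hij, hj⟩ := hreach i
    refine ⟨j, reflTransGen_mono_of_ne (fun k l hkl hpos => ?_) hij, ?_⟩
    · simp [algebraMap_matrix_apply, hkl, hpos.ne']
    · linarith [sum_norm_algebraMap_sub_map_le (hoff j) hγ]

theorem re_neg_of_mem_spectrum_of_sum_row_nonpos (hoff : ∀ i j, i ≠ j → 0 ≤ A i j)
    (hrow : ∀ i, ∑ j, A i j ≤ 0)
    (hreach : ∀ i, ∃ j, ReflTransGen (fun k l => 0 < A k l) i j ∧ ∑ l, A j l < 0)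
    (hγ : γ ∈ spectrum ℂ (A.map Complex.ofReal)) : γ.re < 0 := by
  by_contra! hre
  refine spectrum.mem_iff.mp hγ ((isUnit_iff_isUnit_det _).mpr (isUnit_iff_ne_zero.mpr ?_))
  exact (isWeaklyChainedDiagDominant_algebraMap_sub_map hoff hrow hreach hre).det_ne_zero

theorem stmt0_general {Q : Matrix n n ℝ} (hoff : ∀ i j, i ≠ j → 0 ≤ Q i j)
    (hrow : ∀ i, ∑ j, Q i j ≤ 0) {β : n → ℝ} (hβ : ∀ i, β i ≤ 0)
    (hreach : ∀ i, ∃ j, ReflTransGen (fun k l => 0 < Q k l) i j ∧ β j < 0)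
    {p : ℝ} (hp : 0 < p)
    (hγ : γ ∈ spectrum ℂ ((Q + (p / 2) • diagonal β).map Complex.ofReal)) : γ.re < 0 := by
  have hentry : ∀ i j, i ≠ j → (Q + (p / 2) • diagonal β) i j = Q i j := fun i j hij => by
    simp [hij]
  have hsum : ∀ i, ∑ j, (Q + (p / 2) • diagonal β) i j = ∑ j, Q i j + p / 2 * β i := fun i => by
    simp [sum_add_distrib, diagonal_apply]
  refine re_neg_of_mem_spectrum_of_sum_row_nonpos (fun i j hij => ?_) (fun i => ?_) (fun i => ?_) hγ
  · exact (hoff i j hij).trans_eq (hentry i j hij).symm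
  · rw [hsum]
    exact add_nonpos (hrow i) (mul_nonpos_of_nonneg_of_nonpos (half_pos hp).le (hβ i))
  · obtain ⟨j, hij, hj⟩ := hreach i
    refine ⟨j, reflTransGen_mono_of_ne (fun k l hkl hpos => ?_) hij, ?_⟩
    · rwa [hentry k l hkl]
    · rw [hsum]
      exact add_neg_of_nonpos_of_neg (hrow j) (mul_neg_of_pos_of_neg (half_pos hp) hj)

end NonnegOffDiag

theorem MatrixIrreducible.reflTransGen {N : ℕ} {Q : Matrix (Fin N) (Fin N) ℝ}
    (hQ : MatrixIrreducible Q) (i j : Fin N) : ReflTransGen (fun k l => 0 < Q k l) i j := by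
  obtain rfl | hij := eq_or_ne i j
  · rfl
  obtain ⟨k, c, rfl, rfl, hc⟩ := hQ i j hij
  exact (reflTransGen_of_succ_of_le (fun a b => 0 < Q (c a) (c b)) (fun l hl => hc l hl.2)
    k.zero_le).lift c fun _ _ h => h

theorem exists_neg_of_sum_mul_neg {ι R : Type*} [Semiring R] [LinearOrder R] [IsOrderedRing R]
    {s : Finset ι} {μ β : ι → R} (hμ : ∀ i ∈ s, 0 ≤ μ i) (h : ∑ i ∈ s, μ i * β i < 0) :
    ∃ i ∈ s, β i < 0 := by
  by_contra! hβ
  exact h.not_ge (sum_nonneg fun i hi => mul_nonneg (hμ i hi) (hβ i hi))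

theorem stmt0 {N : ℕ} (hN : 2 ≤ N)
    (Q : Matrix (Fin N) (Fin N) ℝ)
    (hQ : IsConservativeQMatrix Q) (hirr : MatrixIrreducible Q)
    (μ : Fin N → ℝ) (hμpos : ∀ i, 0 < μ i) (hμsum : ∑ i, μ i = 1)
    (hμstat : ∀ j, ∑ i, μ i * Q i j = 0)
    (β : Fin N → ℝ) (havg : ∑ i, μ i * β i < 0) (hβ : ∀ i, β i ≤ 0)
    (p : ℝ) (hp : 0 < p) (ηp : ℝ)
    (hη : IsGreatest (spectrumRe (Q + (p / 2) • Matrix.diagonal β)) (-ηp)) :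
    0 < ηp := by
  obtain ⟨⟨γ, hγ, hre⟩, -⟩ := hη
  obtain ⟨j, -, hj⟩ := exists_neg_of_sum_mul_neg (fun i _ => (hμpos i).le) havg
  linarith [stmt0_general hQ.1 (fun i => (hQ.2 i).le) hβ (fun i => ⟨j, hirr.reflTransGen i j, hj⟩)
    hp hγ]
end

section
/- Let S = {1,…,N} with 2 ≤ N < ∞, let Q = (q_ij) be an irreducible conservative Q-matrix on S which is reversible with respect to a probability measure π on S (π_i q_ij = π_j q_ji, π_i > 0, Σ_i π_i = 1), and let β ∈ ℝ^N. Define D(f) := (1/2)Σ_{i,j} π_i q_ij (f_j − f_i)² − Σ_i π_i β_i f_i² and λ_0 := inf{D(f) : Σ_i π_i f_i² = 1}. If there exist λ > 0 and a vector ξ ∈ ℝ^N with ξ_i > 0 for all i such that Σ_j q_ij ξ_j + β_i ξ_i ≤ −λ ξ_i for every i ∈ S, then λ_0 ≥ λ. -/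
/-- The bilinear form `D(f) = (1/2) Σ_{i,j} π_i q_ij (f_j - f_i)² - Σ_i π_i β_i f_i²`. -/
noncomputable def Dform {N : ℕ} (π : Fin N → ℝ) (Q : Matrix (Fin N) (Fin N) ℝ)
    (β : Fin N → ℝ) (f : Fin N → ℝ) : ℝ :=
  (1 / 2) * ∑ i, ∑ j, π i * Q i j * (f j - f i) ^ 2 - ∑ i, π i * β i * f i ^ 2

/-- The principal eigenvalue `λ₀ = inf {D(f) : Σ_i π_i f_i² = 1}`. -/
noncomputable def principalEigenvalue {N : ℕ} (π : Fin N → ℝ)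
    (Q : Matrix (Fin N) (Fin N) ℝ) (β : Fin N → ℝ) : ℝ :=
  sInf {y : ℝ | ∃ f : Fin N → ℝ, ∑ i, π i * f i ^ 2 = 1 ∧ Dform π Q β f = y}

/-! Picone's identity `(b - a)² - (b² / y - a² / x) (y - x) = x y (b / y - a / x)²`, applied along
every transition, bounds the Dirichlet energy of `f` from below by the Dirichlet form of `f² / ξ`
and `ξ`. By reversibility and summation by parts the latter equals `-∑ i, π i (f i² / ξ i) (Q ξ) i`,
and the supersolution inequality for `ξ` bounds it below by `∑ i, π i (λ + β i) f i²`. -/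

theorem picone_identity {K : Type*} [Field K] {x y : K} (hx : x ≠ 0) (hy : y ≠ 0) (a b : K) :
    (b - a) ^ 2 - (b ^ 2 / y - a ^ 2 / x) * (y - x) = x * y * (b / y - a / x) ^ 2 := by
  field_simp
  ring

theorem picone_inequality {K : Type*} [Field K] [LinearOrder K] [IsStrictOrderedRing K]
    {x y : K} (hx : 0 < x) (hy : 0 < y) (a b : K) :
    (b ^ 2 / y - a ^ 2 / x) * (y - x) ≤ (b - a) ^ 2 := by
  rw [← sub_nonneg, picone_identity hx.ne' hy.ne']
  positivity

section DirichletForm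

variable {ι : Type*} [Fintype ι] {w : ι → ι → ℝ}

/-- The Dirichlet form of the weighted graph on `ι` with edge weights `w`. The sum runs over ordered
pairs, so each edge is counted twice, which the factor `1 / 2` compensates. -/
noncomputable def dirichletForm (w : ι → ι → ℝ) (u v : ι → ℝ) : ℝ :=
  (1 / 2) * ∑ i, ∑ j, w i j * ((u j - u i) * (v j - v i))

theorem dirichletForm_sq_div_le_self (hw : ∀ i j, i ≠ j → 0 ≤ w i j) {ξ : ι → ℝ}
    (hξ : ∀ i, 0 < ξ i) (f : ι → ℝ) :
    dirichletForm w (fun i => f i ^ 2 / ξ i) ξ ≤ dirichletForm w f f := by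
  unfold dirichletForm
  gcongr (1 / 2) * ∑ i, ∑ j, ?_ with i _ j _
  rcases eq_or_ne i j with rfl | hij
  · simp
  · rw [← sq (f j - f i)]
    exact mul_le_mul_of_nonneg_left (picone_inequality (hξ i) (hξ j) _ _) (hw i j hij)

theorem dirichletForm_eq_neg_sum (hw : ∀ i j, w i j = w j i) (u v : ι → ℝ) :
    dirichletForm w u v = -∑ i, u i * ∑ j, w i j * (v j - v i) := by
  have hswap : ∑ i, ∑ j, w i j * (u j * (v j - v i)) =
      -∑ i, ∑ j, w i j * (u i * (v j - v i)) := by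
    rw [Finset.sum_comm]
    simp only [← Finset.sum_neg_distrib]
    refine Finset.sum_congr rfl fun i _ => Finset.sum_congr rfl fun j _ => ?_
    rw [hw j i]
    ring
  calc dirichletForm w u v
      = (1 / 2) * (∑ i, ∑ j, w i j * (u j * (v j - v i)) -
          ∑ i, ∑ j, w i j * (u i * (v j - v i))) := by
        simp only [dirichletForm, sub_mul, mul_sub (w _ _) (u _ * _), Finset.sum_sub_distrib]
    _ = -∑ i, ∑ j, w i j * (u i * (v j - v i)) := by
        rw [hswap]
        ring
    _ = -∑ i, u i * ∑ j, w i j * (v j - v i) := by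
        simp only [Finset.mul_sum, mul_left_comm (u _)]

theorem dirichletForm_eq_neg_sum_of_reversible {Q : Matrix ι ι ℝ} {π : ι → ℝ}
    (hrow : ∀ i, ∑ j, Q i j = 0) (hrev : ∀ i j, π i * Q i j = π j * Q j i) (u v : ι → ℝ) :
    dirichletForm (fun i j => π i * Q i j) u v = -∑ i, π i * u i * ∑ j, Q i j * v j := by
  have hgenerator (i : ι) : ∑ j, Q i j * (v j - v i) = ∑ j, Q i j * v j := by
    simp only [mul_sub, Finset.sum_sub_distrib, ← Finset.sum_mul, hrow i, zero_mul, sub_zero]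
  simp only [dirichletForm_eq_neg_sum hrev, mul_assoc (π _), ← Finset.mul_sum, hgenerator,
    mul_left_comm (u _)]

theorem sum_mul_sq_le_dirichletForm_of_supersolution {Q : Matrix ι ι ℝ} {π V ξ : ι → ℝ}
    (hoff : ∀ i j, i ≠ j → 0 ≤ Q i j) (hrow : ∀ i, ∑ j, Q i j = 0) (hπ : ∀ i, 0 ≤ π i)
    (hrev : ∀ i j, π i * Q i j = π j * Q j i) (hξpos : ∀ i, 0 < ξ i)
    (hξ : ∀ i, ∑ j, Q i j * ξ j ≤ -(V i * ξ i)) (f : ι → ℝ) :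
    ∑ i, π i * V i * f i ^ 2 ≤ dirichletForm (fun i j => π i * Q i j) f f := by
  have hterm (i : ι) :
      π i * V i * f i ^ 2 ≤ -(π i * (f i ^ 2 / ξ i) * ∑ j, Q i j * ξ j) := by
    have hξi : ξ i ≠ 0 := (hξpos i).ne'
    have hweight : 0 ≤ π i * (f i ^ 2 / ξ i) :=
      mul_nonneg (hπ i) (div_nonneg (sq_nonneg _) (hξpos i).le)
    calc π i * V i * f i ^ 2
        = π i * (f i ^ 2 / ξ i) * (V i * ξ i) := by field_simp
      _ ≤ π i * (f i ^ 2 / ξ i) * -∑ j, Q i j * ξ j :=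
          mul_le_mul_of_nonneg_left (le_neg_of_le_neg (hξ i)) hweight
      _ = -(π i * (f i ^ 2 / ξ i) * ∑ j, Q i j * ξ j) := mul_neg _ _
  calc ∑ i, π i * V i * f i ^ 2
      ≤ -∑ i, π i * (f i ^ 2 / ξ i) * ∑ j, Q i j * ξ j := by
        rw [← Finset.sum_neg_distrib]
        exact Finset.sum_le_sum fun i _ => hterm i
    _ = dirichletForm (fun i j => π i * Q i j) (fun i => f i ^ 2 / ξ i) ξ :=
        (dirichletForm_eq_neg_sum_of_reversible hrow hrev _ _).symm
    _ ≤ dirichletForm (fun i j => π i * Q i j) f f :=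
        dirichletForm_sq_div_le_self (fun i j hij => mul_nonneg (hπ i) (hoff i j hij)) hξpos f

end DirichletForm

theorem Dform_eq_dirichletForm_sub {N : ℕ} (π : Fin N → ℝ) (Q : Matrix (Fin N) (Fin N) ℝ)
    (β f : Fin N → ℝ) :
    Dform π Q β f =
      dirichletForm (fun i j => π i * Q i j) f f - ∑ i, π i * β i * f i ^ 2 := by
  simp only [Dform, dirichletForm, sq]

theorem mul_sum_le_Dform_of_supersolution {N : ℕ} {Q : Matrix (Fin N) (Fin N) ℝ}
    (hQ : IsConservativeQMatrix Q) {π : Fin N → ℝ} (hπ : ∀ i, 0 ≤ π i)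
    (hrev : ∀ i j, π i * Q i j = π j * Q j i) {β ξ : Fin N → ℝ} {lam : ℝ} (hξpos : ∀ i, 0 < ξ i)
    (hξ : ∀ i, (∑ j, Q i j * ξ j) + β i * ξ i ≤ -lam * ξ i) (f : Fin N → ℝ) :
    lam * ∑ i, π i * f i ^ 2 ≤ Dform π Q β f := by
  rw [Dform_eq_dirichletForm_sub, le_sub_iff_add_le]
  calc lam * ∑ i, π i * f i ^ 2 + ∑ i, π i * β i * f i ^ 2
      = ∑ i, π i * (lam + β i) * f i ^ 2 := by
        rw [Finset.mul_sum, ← Finset.sum_add_distrib]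
        exact Finset.sum_congr rfl fun i _ => by ring
    _ ≤ dirichletForm (fun i j => π i * Q i j) f f :=
        sum_mul_sq_le_dirichletForm_of_supersolution hQ.1 hQ.2 hπ hrev hξpos
          (fun i => by linarith [hξ i]) f

theorem stmt13_general {N : ℕ} (Q : Matrix (Fin N) (Fin N) ℝ) (hQ : IsConservativeQMatrix Q)
    (π : Fin N → ℝ) (hπ : ∀ i, 0 ≤ π i) (hπsum : ∑ i, π i = 1)
    (hrev : ∀ i j, π i * Q i j = π j * Q j i) (β : Fin N → ℝ) (lam : ℝ)
    (ξ : Fin N → ℝ) (hξpos : ∀ i, 0 < ξ i)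
    (hξ : ∀ i, (∑ j, Q i j * ξ j) + β i * ξ i ≤ -lam * ξ i) :
    lam ≤ principalEigenvalue π Q β := by
  refine le_csInf ⟨_, fun _ => 1, by simpa using hπsum, rfl⟩ ?_
  rintro _ ⟨f, hf, rfl⟩
  simpa only [hf, mul_one] using mul_sum_le_Dform_of_supersolution hQ hπ hrev hξpos hξ f

theorem stmt13 {N : ℕ} (hN : 2 ≤ N)
    (Q : Matrix (Fin N) (Fin N) ℝ)
    (hQ : IsConservativeQMatrix Q) (hirr : MatrixIrreducible Q)
    (π : Fin N → ℝ) (hπpos : ∀ i, 0 < π i) (hπsum : ∑ i, π i = 1)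
    (hrev : ∀ i j, π i * Q i j = π j * Q j i)
    (β : Fin N → ℝ)
    (lam : ℝ) (hlam : 0 < lam)
    (ξ : Fin N → ℝ) (hξpos : ∀ i, 0 < ξ i)
    (hξ : ∀ i, (∑ j, Q i j * ξ j) + β i * ξ i ≤ -lam * ξ i) :
    lam ≤ principalEigenvalue π Q β :=
  stmt13_general Q hQ π (fun i => (hπpos i).le) hπsum hrev β lam ξ hξpos hξ
end

section
/- Let (E,d) be a complete separable metric space with its Borel σ-algebra, let p ∈ (0,1], and for probability measures μ, ν on E let W_p(μ,ν) := inf{∫_{E×E} d(x,y)^p dπ : π a coupling of μ and ν}. Let (K_l)_{l ∈ ℕ} be a sequence of Markov kernels from E to E such that (x,y) ↦ W_p(K_l(x), K_l(y)) is Borel measurable for each l. Suppose μ and ν are probability measures on E that are invariant for every K_l (i.e. μK_l = μ and νK_l = ν for all l), and that ∫_E ∫_E W_p(K_l(x), K_l(y)) μ(dx) ν(dy) → 0 as l → ∞. Then μ = ν. -/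
open MeasureTheory
open scoped ENNReal

/-- The Wasserstein quantity
`W_p(μ, ν) = inf {∫ d(x,y)^p dπ : π a coupling of μ and ν}` (with values in
`[0,∞]`), a coupling being a measure on `E × E` with marginals `μ` and `ν`. -/
noncomputable def Wp {E : Type*} [MeasurableSpace E] [PseudoMetricSpace E]
    (p : ℝ) (μ ν : Measure E) : ℝ≥0∞ :=
  sInf {c : ℝ≥0∞ | ∃ π : Measure (E × E),
    π.map Prod.fst = μ ∧ π.map Prod.snd = ν ∧
    ∫⁻ q, ENNReal.ofReal (dist q.1 q.2 ^ p) ∂π = c}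

/-!
Replacing the indicator of `B` at `x` by that of its `δ`-thickening at `y` costs at most
`(d(x, y) / δ) ^ p`. Integrating this against couplings of `K_l(x)` and `K_l(y)`, and then over `x`
and `y`, turns invariance into
`δ ^ p * μ B ≤ δ ^ p * ν (thickening δ B) + ∫∫ W_p(K_l(x), K_l(y)) μ(dx) ν(dy)`.
For fixed `δ` the error vanishes as `l → ∞`, so the Lévy-Prokhorov distance of `μ` and `ν` is zero.
-/

open Filter Metric ProbabilityTheory
open scoped Topology

section Duality

variable {E : Type*} [PseudoMetricSpace E] [MeasurableSpace E] {p : ℝ} {f g : E → ℝ≥0∞}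

lemma lintegral_le_lintegral_add_Wp (hf : Measurable f) (hg : Measurable g)
    (hfg : ∀ x y, f x ≤ g y + ENNReal.ofReal (dist x y ^ p)) (α β : Measure E) :
    ∫⁻ z, f z ∂α ≤ ∫⁻ z, g z ∂β + Wp p α β := by
  rw [← tsub_le_iff_left]
  refine le_sInf ?_
  rintro _ ⟨π, rfl, rfl, rfl⟩
  have hg_snd : Measurable fun q : E × E ↦ g q.2 := hg.comp measurable_snd
  rw [tsub_le_iff_left, lintegral_map hf measurable_fst, lintegral_map hg measurable_snd,
    ← lintegral_add_left hg_snd]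
  exact lintegral_mono fun q ↦ hfg q.1 q.2

lemma lintegral_bind_le_lintegral_bind_add_lintegral_Wp {X Y : Type*} [MeasurableSpace X]
    [MeasurableSpace Y] (hf : Measurable f) (hg : Measurable g)
    (hfg : ∀ x y, f x ≤ g y + ENNReal.ofReal (dist x y ^ p)) (κ : Kernel X E) (η : Kernel Y E)
    (μ : Measure X) (ν : Measure Y) [IsProbabilityMeasure μ] [IsProbabilityMeasure ν] :
    ∫⁻ z, f z ∂μ.bind κ ≤ ∫⁻ z, g z ∂ν.bind η + ∫⁻ x, ∫⁻ y, Wp p (κ x) (η y) ∂ν ∂μ := by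
  have integrate_y (x : X) :
      ∫⁻ z, f z ∂κ x ≤ ∫⁻ z, g z ∂ν.bind η + ∫⁻ y, Wp p (κ x) (η y) ∂ν :=
    calc ∫⁻ z, f z ∂κ x
      _ = ∫⁻ _, ∫⁻ z, f z ∂κ x ∂ν := by rw [lintegral_const, measure_univ, mul_one]
      _ ≤ ∫⁻ y, (∫⁻ z, g z ∂η y + Wp p (κ x) (η y)) ∂ν :=
        lintegral_mono fun y ↦ lintegral_le_lintegral_add_Wp hf hg hfg (κ x) (η y)
      _ = ∫⁻ z, g z ∂ν.bind η + ∫⁻ y, Wp p (κ x) (η y) ∂ν := by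
        rw [lintegral_add_left hg.lintegral_kernel,
          Measure.lintegral_bind η.aemeasurable hg.aemeasurable]
  calc ∫⁻ z, f z ∂μ.bind κ
    _ = ∫⁻ x, ∫⁻ z, f z ∂κ x ∂μ := Measure.lintegral_bind κ.aemeasurable hf.aemeasurable
    _ ≤ ∫⁻ x, (∫⁻ z, g z ∂ν.bind η + ∫⁻ y, Wp p (κ x) (η y) ∂ν) ∂μ := lintegral_mono integrate_y
    _ = ∫⁻ z, g z ∂ν.bind η + ∫⁻ x, ∫⁻ y, Wp p (κ x) (η y) ∂ν ∂μ := by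
      rw [lintegral_add_left measurable_const, lintegral_const, measure_univ, mul_one]

end Duality

lemma indicator_le_indicator_thickening_add {E : Type*} [PseudoMetricSpace E] {p δ : ℝ}
    (hp : 0 ≤ p) (hδ : 0 ≤ δ) (B : Set E) (x y : E) :
    B.indicator (fun _ ↦ ENNReal.ofReal (δ ^ p)) x ≤
      (thickening δ B).indicator (fun _ ↦ ENNReal.ofReal (δ ^ p)) y +
        ENNReal.ofReal (dist x y ^ p) := by
  by_cases hx : x ∈ B
  · rw [Set.indicator_of_mem hx]
    rcases lt_or_ge (dist x y) δ with hxy | hxy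
    · have hy : y ∈ thickening δ B := mem_thickening_iff.2 ⟨x, hx, dist_comm x y ▸ hxy⟩
      rw [Set.indicator_of_mem hy]
      exact le_self_add
    · exact (ENNReal.ofReal_le_ofReal (Real.rpow_le_rpow hδ hxy hp)).trans le_add_self
  · rw [Set.indicator_of_notMem hx]
    exact zero_le

section Borel

variable {E : Type*} [PseudoMetricSpace E] [MeasurableSpace E]

lemma mul_measure_bind_le_mul_measure_bind_thickening_add [OpensMeasurableSpace E]
    {X Y : Type*} [MeasurableSpace X] [MeasurableSpace Y] {p δ : ℝ} (hp : 0 ≤ p) (hδ : 0 ≤ δ)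
    (κ : Kernel X E) (η : Kernel Y E) (μ : Measure X) (ν : Measure Y) [IsProbabilityMeasure μ]
    [IsProbabilityMeasure ν] {B : Set E} (hB : MeasurableSet B) :
    ENNReal.ofReal (δ ^ p) * μ.bind κ B ≤
      ENNReal.ofReal (δ ^ p) * ν.bind η (thickening δ B) +
        ∫⁻ x, ∫⁻ y, Wp p (κ x) (η y) ∂ν ∂μ := by
  have hBδ : MeasurableSet (thickening δ B) := isOpen_thickening.measurableSet
  rw [← lintegral_indicator_const hB, ← lintegral_indicator_const hBδ]
  exact lintegral_bind_le_lintegral_bind_add_lintegral_Wp (measurable_const.indicator hB)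
    (measurable_const.indicator hBδ) (indicator_le_indicator_thickening_add hp hδ B) κ η μ ν

lemma eq_of_levyProkhorovEDist_eq_zero [BorelSpace E] {μ ν : Measure E} [IsProbabilityMeasure μ]
    [IsProbabilityMeasure ν] (h : levyProkhorovEDist μ ν = 0) : μ = ν := by
  let toLevyProkhorov (ρ : Measure E) [IsProbabilityMeasure ρ] :
      LevyProkhorov (ProbabilityMeasure E) := .ofMeasure ⟨ρ, inferInstance⟩
  have h_edist : edist (toLevyProkhorov μ) (toLevyProkhorov ν) = 0 := h
  exact congrArg (fun ρ ↦ (ρ.toMeasure : Measure E)) (edist_eq_zero.1 h_edist)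

theorem stmt15_general [BorelSpace E] {p : ℝ} (hp : 0 < p) {ι : Type*} {L : Filter ι} [L.NeBot]
    (κ : ι → Kernel E E) {μ ν : Measure E} [IsProbabilityMeasure μ] [IsProbabilityMeasure ν]
    (hμ : ∀ i, (κ i).Invariant μ) (hν : ∀ i, (κ i).Invariant ν)
    (h : Tendsto (fun i ↦ ∫⁻ x, ∫⁻ y, Wp p (κ i x) (κ i y) ∂ν ∂μ) L (𝓝 0)) :
    μ = ν := by
  have measure_le_thickening {δ : ℝ} (hδ : 0 < δ) {B : Set E} (hB : MeasurableSet B) :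
      μ B ≤ ν (thickening δ B) := by
    set c := ENNReal.ofReal (δ ^ p)
    have hc : c ≠ 0 := (ENNReal.ofReal_pos.2 (Real.rpow_pos_of_pos hδ p)).ne'
    have bound (i : ι) :
        c * μ B ≤ c * ν (thickening δ B) + ∫⁻ x, ∫⁻ y, Wp p (κ i x) (κ i y) ∂ν ∂μ := by
      simpa only [(hμ i).def, (hν i).def] using
        mul_measure_bind_le_mul_measure_bind_thickening_add hp.le hδ.le (κ i) (κ i) μ ν hB
    have limit_bound : c * μ B ≤ c * ν (thickening δ B) + 0 :=
      ge_of_tendsto' (h.const_add _) bound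
    rwa [add_zero, ENNReal.mul_le_mul_iff_right hc ENNReal.ofReal_ne_top] at limit_bound
  refine eq_of_levyProkhorovEDist_eq_zero (nonpos_iff_eq_zero.1 ?_)
  refine levyProkhorovEDist_le_of_forall_le μ ν 0 fun ε B hε hε_top hB ↦ ?_
  exact (measure_le_thickening (ENNReal.toReal_pos hε.ne' hε_top.ne) hB).trans le_self_add

end Borel

theorem stmt15 {E : Type*} [MetricSpace E] [CompleteSpace E]
    [TopologicalSpace.SeparableSpace E] [MeasurableSpace E] [BorelSpace E]
    (p : ℝ) (hp0 : 0 < p) (hp1 : p ≤ 1)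
    (K : ℕ → E → Measure E) (hKmeas : ∀ l, Measurable (K l))
    (hKprob : ∀ l x, IsProbabilityMeasure (K l x))
    (hWmeas : ∀ l, Measurable fun q : E × E => Wp p (K l q.1) (K l q.2))
    (μ ν : Measure E) [IsProbabilityMeasure μ] [IsProbabilityMeasure ν]
    (hμinv : ∀ l, μ.bind (K l) = μ) (hνinv : ∀ l, ν.bind (K l) = ν)
    (hto : Filter.Tendsto
      (fun l => ∫⁻ x, ∫⁻ y, Wp p (K l x) (K l y) ∂ν ∂μ)
      Filter.atTop (nhds 0)) :
    μ = ν := by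
  exact stmt15_general hp0 (fun l ↦ ⟨K l, hKmeas l⟩) hμinv hνinv hto
end

section
/- Let S be a countably infinite set and q : S × S → ℝ satisfy: q(r,j) ≥ 0 for all r ≠ j, the family (q(r,j))_{j≠r} is summable with Σ_{j∈S} q(r,j) = 0 for every r ∈ S, and q_0 := sup_{r∈S}(−q(r,r)) < ∞. Let F_1, …, F_{m+1} be a partition of S into nonempty sets and φ : S → {1,…,m+1} the index map with r ∈ F_{φ(r)}. Define, for i ≠ j in {1,…,m+1}: q^F_{ij} := sup_{r∈F_i} Σ_{k∈F_j} q(r,k) if j < i, q^F_{ij} := inf_{r∈F_i} Σ_{k∈F_j} q(r,k) if j > i, and q^F_{ii} := −Σ_{j≠i} q^F_{ij}. Let ξ^F ∈ ℝ^{m+1} satisfy ξ^F_1 > ξ^F_2 > ⋯ > ξ^F_{m+1} > 0 and set ξ_r := ξ^F_{φ(r)} for r ∈ S. Then for every r ∈ S: Σ_{j∈S} q(r,j) ξ_j ≤ Σ_{j=1}^{m+1} q^F_{φ(r) j} ξ^F_j, i.e. (Qξ)(r) ≤ (Q^F ξ^F)(φ(r)). -/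
/-- The (absolutely convergent) sum `Σ_{k ∈ A} q(r,k)`. -/
noncomputable def rowSumOn {S : Type*} (q : S → S → ℝ) (A : Set S) (r : S) : ℝ :=
  ∑' k : A, q r k

/-- The off-diagonal entries of the matrix `Q^F` associated with the finite
partition `F` of `S`:
`q^F_{ij} = sup_{r ∈ F_i} Σ_{k ∈ F_j} q(r,k)` for `j < i` and
`q^F_{ij} = inf_{r ∈ F_i} Σ_{k ∈ F_j} q(r,k)` for `j > i`. -/
noncomputable def qFoff {S : Type*} {m : ℕ} (q : S → S → ℝ)
    (F : Fin (m + 1) → Set S) (i j : Fin (m + 1)) : ℝ :=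
  if j < i then sSup ((fun r => rowSumOn q (F j) r) '' F i)
  else sInf ((fun r => rowSumOn q (F j) r) '' F i)

/-- The matrix `Q^F` associated with the finite partition `F` of `S`; its
diagonal entries are `q^F_{ii} = -Σ_{j ≠ i} q^F_{ij}`. -/
noncomputable def qF {S : Type*} {m : ℕ} (q : S → S → ℝ)
    (F : Fin (m + 1) → Set S) (i j : Fin (m + 1)) : ℝ :=
  if i = j then -∑ k ∈ Finset.univ.erase i, qFoff q F i k else qFoff q F i j

/-! Write `i = φ r`. Collecting terms by blocks gives `(Qξ)(r) = ∑ j, rowSumOn q (F j) r * ξF j`, so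
both sides of the inequality weigh `ξF` by a family with total `0`, and subtracting the constant
`ξF i` from `ξF` changes neither side. The supremum entries, `j < i`, dominate the block sums and
now meet the factor `ξF j - ξF i ≥ 0`; the infimum entries, `j > i`, are dominated by them and meet
a factor `≤ 0`; the diagonal entry meets the factor `0`. -/

theorem sum_mul_le_sum_mul_of_antitone {ι R : Type*} [LinearOrder ι] [Ring R] [PartialOrder R]
    [IsOrderedRing R] {s : Finset ι} {a b ξ : ι → R} (i : ι) (hab : ∑ j ∈ s, a j = ∑ j ∈ s, b j)
    (hlt : ∀ j ∈ s, j < i → a j ≤ b j) (hgt : ∀ j ∈ s, i < j → b j ≤ a j) (hξ : Antitone ξ) :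
    ∑ j ∈ s, a j * ξ j ≤ ∑ j ∈ s, b j * ξ j := by
  have hcentered : ∑ j ∈ s, a j * (ξ j - ξ i) ≤ ∑ j ∈ s, b j * (ξ j - ξ i) := by
    refine Finset.sum_le_sum fun j hj => ?_
    rcases lt_trichotomy j i with hji | rfl | hij
    · exact mul_le_mul_of_nonneg_right (hlt j hj hji) (sub_nonneg.2 (hξ hji.le))
    · simp
    · exact mul_le_mul_of_nonpos_right (hgt j hj hij) (sub_nonpos.2 (hξ hij.le))
  simpa only [mul_sub, Finset.sum_sub_distrib, ← Finset.sum_mul, hab, sub_le_sub_iff_right]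
    using hcentered

theorem tsum_mul_comp_eq_sum_tsum_fiber {S ι R : Type*} [Fintype ι] [NonUnitalNonAssocSemiring R]
    [TopologicalSpace R] [IsTopologicalSemiring R] [T2Space R] {f : S → R} {φ : S → ι}
    (hf : ∀ i, Summable fun k : φ ⁻¹' {i} => f k) (g : ι → R) :
    ∑' k, f k * g (φ k) = ∑ i, (∑' k : φ ⁻¹' {i}, f k) * g i := by
  have hfiber (i : ι) : HasSum ((fun k => f k * g (φ k)) ∘ ((↑) : φ ⁻¹' {i} → S))
      ((∑' k : φ ⁻¹' {i}, f k) * g i) := by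
    refine ((hf i).hasSum.mul_right (g i)).congr_fun fun k => ?_
    rw [Function.comp_apply, show φ k = i from k.2]
  have hunion := hasSum_sum_disjoint Finset.univ
    (fun i _ j _ hij => pairwise_disjoint_fiber φ hij) fun i _ => hfiber i
  have hcover : ⋃ i ∈ Finset.univ, φ ⁻¹' {i} = Set.univ := by ext; simp
  rw [hcover] at hunion
  exact (tsum_univ _).symm.trans hunion.tsum_eq

theorem disjoint_of_mem_iff_eq {S ι : Type*} {F : ι → Set S} {φ : S → ι}
    (hF : ∀ r i, r ∈ F i ↔ φ r = i) {i j : ι} (hij : i ≠ j) : Disjoint (F i) (F j) :=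
  Set.disjoint_left.2 fun r hi hj => hij (((hF r i).1 hi).symm.trans ((hF r j).1 hj))

section BlockSums

variable {S : Type*} {q : S → S → ℝ} {A B : Set S}

theorem rowSumOn_nonneg {s : S} (hoff : ∀ j, s ≠ j → 0 ≤ q s j) (hs : s ∉ A) :
    0 ≤ rowSumOn q A s :=
  tsum_nonneg fun k => hoff k (ne_of_mem_of_not_mem k.2 hs).symm

theorem rowSumOn_le_tsum_sub_diag {s : S} (hoff : ∀ j, s ≠ j → 0 ≤ q s j)
    (hsum : Summable (q s)) (hs : s ∉ A) :
    rowSumOn q A s ≤ (∑' j, q s j) - q s s := by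
  have hdiag : q s s ≤ rowSumOn q Aᶜ s :=
    (hsum.subtype Aᶜ).le_tsum ⟨s, hs⟩ fun k hk => hoff k fun h => hk (Subtype.ext h.symm)
  have hsplit : rowSumOn q A s + rowSumOn q Aᶜ s = ∑' j, q s j :=
    hsum.tsum_subtype_add_tsum_subtype_compl A
  linarith

theorem bddBelow_rowSumOn_image (hoff : ∀ r j, r ≠ j → 0 ≤ q r j) (hAB : Disjoint A B) :
    BddBelow (rowSumOn q A '' B) :=
  ⟨0, Set.forall_mem_image.2 fun s hs => rowSumOn_nonneg (hoff s) (hAB.notMem_of_mem_right hs)⟩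

theorem bddAbove_rowSumOn_image (hoff : ∀ r j, r ≠ j → 0 ≤ q r j)
    (hsum : ∀ r, Summable (q r)) {C : ℝ} (hC : ∀ r, (∑' j, q r j) - q r r ≤ C)
    (hAB : Disjoint A B) : BddAbove (rowSumOn q A '' B) :=
  ⟨C, Set.forall_mem_image.2 fun s hs =>
    (rowSumOn_le_tsum_sub_diag (hoff s) (hsum s) (hAB.notMem_of_mem_right hs)).trans (hC s)⟩

end BlockSums

section QF

variable {S : Type*} {m : ℕ} {q : S → S → ℝ} {F : Fin (m + 1) → Set S} {i j : Fin (m + 1)} {r : S}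

theorem qF_of_ne (hij : i ≠ j) : qF q F i j = qFoff q F i j :=
  if_neg hij

theorem sum_qF_eq_zero (q : S → S → ℝ) (F : Fin (m + 1) → Set S) (i : Fin (m + 1)) :
    ∑ j, qF q F i j = 0 := by
  have hoffdiag :
      ∑ j ∈ Finset.univ.erase i, qF q F i j = ∑ j ∈ Finset.univ.erase i, qFoff q F i j :=
    Finset.sum_congr rfl fun j hj => qF_of_ne (Finset.ne_of_mem_erase hj).symm
  rw [← Finset.add_sum_erase _ _ (Finset.mem_univ i), hoffdiag, qF, if_pos rfl, neg_add_cancel]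

theorem rowSumOn_le_qF_of_lt (hji : j < i) (hbdd : BddAbove (rowSumOn q (F j) '' F i))
    (hr : r ∈ F i) : rowSumOn q (F j) r ≤ qF q F i j := by
  rw [qF_of_ne hji.ne', qFoff, if_pos hji]
  exact le_csSup hbdd (Set.mem_image_of_mem _ hr)

theorem qF_le_rowSumOn_of_lt (hij : i < j) (hbdd : BddBelow (rowSumOn q (F j) '' F i))
    (hr : r ∈ F i) : qF q F i j ≤ rowSumOn q (F j) r := by
  rw [qF_of_ne hij.ne, qFoff, if_neg hij.not_gt]
  exact csInf_le hbdd (Set.mem_image_of_mem _ hr)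

end QF

theorem stmt16_general {S : Type*} {m : ℕ} (q : S → S → ℝ) (F : Fin (m + 1) → Set S)
    (φ : S → Fin (m + 1)) (hpart : ∀ (r : S) (i : Fin (m + 1)), r ∈ F i ↔ φ r = i)
    (ξF : Fin (m + 1) → ℝ) (hanti : Antitone ξF) (r : S)
    (hsum : Summable (q r)) (hzero : ∑' j, q r j = 0)
    (habove : ∀ j < φ r, BddAbove (rowSumOn q (F j) '' F (φ r)))
    (hbelow : ∀ j > φ r, BddBelow (rowSumOn q (F j) '' F (φ r))) :
    (∑' j, q r j * ξF (φ j)) ≤ ∑ j, qF q F (φ r) j * ξF j := by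
  have hblocks (g : Fin (m + 1) → ℝ) : ∑' j, q r j * g (φ j) = ∑ i, rowSumOn q (F i) r * g i := by
    obtain rfl : F = fun i => φ ⁻¹' {i} := funext fun i => Set.ext fun s => hpart s i
    exact tsum_mul_comp_eq_sum_tsum_fiber (fun _ => hsum.subtype _) g
  have hrow : ∑ i, rowSumOn q (F i) r = 0 := by
    simpa only [mul_one, hzero] using (hblocks fun _ => 1).symm
  have hr : r ∈ F (φ r) := (hpart r _).2 rfl
  rw [hblocks]
  exact sum_mul_le_sum_mul_of_antitone (φ r) (hrow.trans (sum_qF_eq_zero q F (φ r)).symm)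
    (fun j _ hj => rowSumOn_le_qF_of_lt hj (habove j hj) hr)
    (fun j _ hj => qF_le_rowSumOn_of_lt hj (hbelow j hj) hr) hanti

theorem stmt16 {S : Type*} [Countable S] [Infinite S]
    (q : S → S → ℝ)
    (hoff : ∀ r j, r ≠ j → 0 ≤ q r j)
    (hsum : ∀ r, Summable (q r))
    (hzero : ∀ r, ∑' j, q r j = 0)
    (q₀ : ℝ) (hq₀ : ∀ r, -q r r ≤ q₀)
    {m : ℕ} (F : Fin (m + 1) → Set S) (φ : S → Fin (m + 1))
    (hFne : ∀ i, (F i).Nonempty)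
    (hpart : ∀ (r : S) (i : Fin (m + 1)), r ∈ F i ↔ φ r = i)
    (ξF : Fin (m + 1) → ℝ)
    (hanti : StrictAnti ξF) (hpos : 0 < ξF (Fin.last m)) :
    ∀ r : S, (∑' j, q r j * ξF (φ j)) ≤ ∑ j, qF q F (φ r) j * ξF j := by
  intro r
  exact stmt16_general q F φ hpart ξF hanti.antitone r (hsum r) (hzero r)
    (fun _ h => bddAbove_rowSumOn_image hoff hsum (by simpa [hzero] using hq₀)
      (disjoint_of_mem_iff_eq hpart h.ne))
    (fun _ h => bddBelow_rowSumOn_image hoff (disjoint_of_mem_iff_eq hpart h.ne'))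
end

section
/- Let m ≥ 0, let Q^F = (q^F_{ij}) be an (m+1)×(m+1) real matrix with q^F_{ij} ≥ 0 for i ≠ j and Σ_{j} q^F_{ij} = 0 for every i, let β^F ∈ ℝ^{m+1}, and let H_{m+1} be the (m+1)×(m+1) upper-triangular matrix of ones (entries H_{ij} = 1 if i ≤ j and 0 otherwise). If the matrix A := −(Q^F + diag(β^F_1,…,β^F_{m+1})) H_{m+1} is a nonsingular M-matrix, then there exists a vector ξ^F ∈ ℝ^{m+1} with ξ^F_1 > ξ^F_2 > ⋯ > ξ^F_{m+1} > 0 such that ((Q^F + diag(β^F)) ξ^F)_i < 0 for every i ∈ {1,…,m+1}. -/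
/-!
Write the M-matrix as `A = sI - B`. By Gelfand's formula `Bⁿ𝟙 < sⁿ𝟙` for large `n`. Truncating the
Neumann series of `(I - s⁻¹B)⁻¹𝟙` gives, up to a scalar, `η = ∑_{l < n} sⁿ⁻¹⁻ˡ Bˡ𝟙`, a positive
vector for which `Aη = sⁿ𝟙 - Bⁿ𝟙` telescopes to a positive vector. For `A = -MH` the vector
`ξ = Hη` then satisfies `Mξ = -Aη < 0`, and its entries, the tail sums of `η`, are positive and
strictly decreasing.
-/

/-- `A` is a nonsingular M-matrix: `A = s I - B` with `B` entrywise nonnegative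
and `s` strictly greater than the spectral radius of `B` (i.e. every complex
eigenvalue of `B` has modulus `< s`). -/
def IsNonsingularMMatrix {k : ℕ} (A : Matrix (Fin k) (Fin k) ℝ) : Prop :=
  ∃ (s : ℝ) (B : Matrix (Fin k) (Fin k) ℝ),
    (∀ i j, 0 ≤ B i j) ∧ A = s • (1 : Matrix (Fin k) (Fin k) ℝ) - B ∧
    ∀ γ ∈ spectrum ℂ (B.map Complex.ofReal), ‖γ‖ < s

/-- The upper-triangular matrix of ones. -/
def upperOnes (k : ℕ) : Matrix (Fin k) (Fin k) ℝ :=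
  Matrix.of fun i j => if i ≤ j then (1 : ℝ) else 0

open Filter Finset Matrix
open scoped ENNReal NNReal

theorem eventually_nnnorm_pow_lt_of_spectralRadius_lt {A : Type*} [NormedRing A]
    [NormedAlgebra ℂ A] [CompleteSpace A] {a : A} {r : ℝ≥0} (hr : spectralRadius ℂ a < r) :
    ∀ᶠ n : ℕ in atTop, ‖a ^ n‖₊ < r ^ n := by
  filter_upwards [(spectrum.gelfand_formula a).eventually_lt_const hr, eventually_gt_atTop 0]
    with n hn hn_pos
  rw [one_div, ENNReal.rpow_inv_lt_iff (by exact_mod_cast hn_pos), ENNReal.rpow_natCast] at hn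
  exact_mod_cast hn

theorem pos_of_forall_mem_spectrum_norm_lt {A : Type*} [Ring A] [Algebra ℂ A]
    [FiniteDimensional ℂ A] [Nontrivial A] {a : A} {s : ℝ}
    (hs : ∀ z ∈ spectrum ℂ a, ‖z‖ < s) : 0 < s :=
  let ⟨z, hz⟩ := spectrum.nonempty_of_isAlgClosed_of_finiteDimensional ℂ a
  (norm_nonneg z).trans_lt (hs z hz)

section SpectralBound

attribute [local instance] Matrix.linftyOpNormedRing Matrix.linftyOpNormedAlgebra

variable {ι : Type*} [Fintype ι] [DecidableEq ι]

theorem mulVec_one_le_linfty_opNorm_map_ofReal (B : Matrix ι ι ℝ) (i : ι) :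
    (B *ᵥ 1) i ≤ ‖B.map Complex.ofReal‖ := by
  have : Nonempty ι := ⟨i⟩
  have h_norm : ‖B.map Complex.ofReal‖ = ‖B‖ := by
    simp only [linfty_opNorm_def, map_apply, Complex.nnnorm_real]
  calc (B *ᵥ 1) i ≤ ‖B *ᵥ 1‖ := (le_abs_self _).trans (norm_le_pi_norm (B *ᵥ 1) i)
    _ ≤ ‖B‖ * ‖(1 : ι → ℝ)‖ := linfty_opNorm_mulVec B 1
    _ = ‖B.map Complex.ofReal‖ := by rw [norm_one, mul_one, h_norm]

theorem eventually_pow_mulVec_one_lt [Nonempty ι] {B : Matrix ι ι ℝ} {s : ℝ}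
    (hs : ∀ z ∈ spectrum ℂ (B.map Complex.ofReal), ‖z‖ < s) :
    ∀ᶠ n : ℕ in atTop, ∀ i, ((B ^ n) *ᵥ 1) i < s ^ n := by
  lift s to ℝ≥0 using (pos_of_forall_mem_spectrum_norm_lt hs).le
  have : CompleteSpace (Matrix ι ι ℂ) := FiniteDimensional.complete ℂ _
  have h_radius : spectralRadius ℂ (B.map Complex.ofReal) < s :=
    spectrum.spectralRadius_lt_of_forall_lt _ hs
  filter_upwards [eventually_nnnorm_pow_lt_of_spectralRadius_lt h_radius] with n hn i
  have h_map : (B ^ n).map Complex.ofReal = B.map Complex.ofReal ^ n :=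
    B.map_pow Complex.ofRealHom n
  calc ((B ^ n) *ᵥ 1) i ≤ ‖B.map Complex.ofReal ^ n‖ :=
        h_map ▸ mulVec_one_le_linfty_opNorm_map_ofReal (B ^ n) i
    _ < s ^ n := by exact_mod_cast hn

end SpectralBound

section PowerSubinvariance

variable {ι R : Type*} [Fintype ι] [DecidableEq ι]

theorem geom_sum₂_mulVec_pos [CommSemiring R] [PartialOrder R] [IsStrictOrderedRing R]
    {B : Matrix ι ι R} (hB : ∀ i j, 0 ≤ B i j) {s : R} (hs : 0 < s) {v : ι → R}
    (hv : ∀ i, 0 < v i) {n : ℕ} (hn : n ≠ 0) (i : ι) :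
    0 < ((∑ l ∈ range n, B ^ l * (s • 1) ^ (n - 1 - l)) *ᵥ v) i := by
  have h_apply : ((∑ l ∈ range n, B ^ l * (s • 1) ^ (n - 1 - l)) *ᵥ v) i =
      ∑ l ∈ range n, s ^ (n - 1 - l) * ((B ^ l) *ᵥ v) i := by
    simp only [smul_pow, one_pow, mul_smul_one, sum_mulVec, smul_mulVec, Finset.sum_apply,
      Pi.smul_apply, smul_eq_mul]
  have h_nonneg (l : ℕ) : 0 ≤ ((B ^ l) *ᵥ v) i :=
    dotProduct_nonneg_of_nonneg (pow_apply_nonneg hB l i) fun j => (hv j).le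
  rw [h_apply]
  refine sum_pos' (fun l _ => mul_nonneg (pow_pos hs _).le (h_nonneg l))
    ⟨0, mem_range.2 (Nat.pos_of_ne_zero hn), ?_⟩
  simpa only [pow_zero, one_mulVec] using mul_pos (pow_pos hs _) (hv i)

theorem exists_pos_mulVec_lt_of_pow_mulVec_lt [CommRing R] [PartialOrder R] [IsStrictOrderedRing R]
    {B : Matrix ι ι R} (hB : ∀ i j, 0 ≤ B i j) {s : R} (hs : 0 < s) {v : ι → R}
    (hv : ∀ i, 0 < v i) {n : ℕ} (h : ∀ i, ((B ^ n) *ᵥ v) i < s ^ n * v i) :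
    ∃ w : ι → R, (∀ i, 0 < w i) ∧ ∀ i, (B *ᵥ w) i < s * w i := by
  set w := (∑ l ∈ range n, B ^ l * (s • 1) ^ (n - 1 - l)) *ᵥ v with hw
  have h_telescope : B *ᵥ w - s • w = (B ^ n) *ᵥ v - s ^ n • v := by
    have h_comm : Commute B (s • 1) := (Commute.one_right B).smul_right s
    calc B *ᵥ w - s • w = (B - s • 1) *ᵥ w := by rw [sub_mulVec, smul_mulVec, one_mulVec]
      _ = (B ^ n - (s • 1) ^ n) *ᵥ v := by rw [hw, mulVec_mulVec, h_comm.mul_geom_sum₂]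
      _ = (B ^ n) *ᵥ v - s ^ n • v := by
        rw [sub_mulVec, smul_pow, one_pow, smul_mulVec, one_mulVec]
  refine ⟨w, fun i => geom_sum₂_mulVec_pos hB hs hv ?_ i, fun i => ?_⟩
  · rintro rfl
    simpa using h i
  · exact sub_neg.1 ((congrFun h_telescope i).trans_lt (sub_neg.2 (h i)))

end PowerSubinvariance

theorem IsNonsingularMMatrix.exists_pos_mulVec_pos {k : ℕ} {A : Matrix (Fin k) (Fin k) ℝ}
    (hA : IsNonsingularMMatrix A) :
    ∃ η : Fin k → ℝ, (∀ i, 0 < η i) ∧ ∀ i, 0 < (A *ᵥ η) i := by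
  obtain ⟨s, B, hB, rfl, hs⟩ := hA
  cases isEmpty_or_nonempty (Fin k)
  · exact ⟨0, isEmptyElim, isEmptyElim⟩
  obtain ⟨n, hn⟩ := (eventually_pow_mulVec_one_lt hs).exists
  obtain ⟨η, hη_pos, hη⟩ := exists_pos_mulVec_lt_of_pow_mulVec_lt (v := 1) hB
    (pos_of_forall_mem_spectrum_norm_lt hs) (fun _ => one_pos) (by simpa using hn)
  refine ⟨η, hη_pos, fun i => ?_⟩
  rw [sub_mulVec, smul_mulVec, one_mulVec]
  exact sub_pos.2 (hη i)

theorem strictAnti_sum_Ici {α M : Type*} [Preorder α] [LocallyFiniteOrderTop α]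
    [AddCommMonoid M] [PartialOrder M] [IsOrderedCancelAddMonoid M] {f : α → M}
    (hf : ∀ a, 0 < f a) : StrictAnti fun a => ∑ b ∈ Ici a, f b := fun a _ hab =>
  sum_lt_sum_of_subset (Ici_subset_Ici.2 hab.le) (mem_Ici.2 le_rfl)
    (fun ha => hab.not_ge (mem_Ici.1 ha)) (hf a) fun b _ _ => (hf b).le

theorem upperOnes_mulVec {k : ℕ} (η : Fin k → ℝ) :
    upperOnes k *ᵥ η = fun i => ∑ j ∈ Ici i, η j := by
  ext i
  simp [upperOnes, mulVec, dotProduct, ← sum_filter, filter_le_eq_Ici]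

theorem stmt17_general {k : ℕ} (M : Matrix (Fin k) (Fin k) ℝ)
    (hM : IsNonsingularMMatrix (-(M * upperOnes k))) :
    ∃ ξ : Fin k → ℝ, StrictAnti ξ ∧ (∀ i, 0 < ξ i) ∧ ∀ i, (M *ᵥ ξ) i < 0 := by
  obtain ⟨η, hη_pos, hη⟩ := hM.exists_pos_mulVec_pos
  refine ⟨upperOnes k *ᵥ η, ?_, fun i => ?_, fun i => ?_⟩
  · rw [upperOnes_mulVec]
    exact strictAnti_sum_Ici hη_pos
  · rw [upperOnes_mulVec]
    exact sum_pos (fun j _ => hη_pos j) nonempty_Ici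
  · rw [mulVec_mulVec]
    exact neg_pos.1 (by simpa only [neg_mulVec, Pi.neg_apply] using hη i)

theorem stmt17 {m : ℕ}
    (QF : Matrix (Fin (m + 1)) (Fin (m + 1)) ℝ)
    (hoff : ∀ i j, i ≠ j → 0 ≤ QF i j) (hrow : ∀ i, ∑ j, QF i j = 0)
    (βF : Fin (m + 1) → ℝ)
    (hM : IsNonsingularMMatrix (-((QF + Matrix.diagonal βF) * upperOnes (m + 1)))) :
    ∃ ξF : Fin (m + 1) → ℝ, StrictAnti ξF ∧ 0 < ξF (Fin.last m) ∧
      ∀ i, (QF + Matrix.diagonal βF).mulVec ξF i < 0 := by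
  obtain ⟨ξ, hξ_anti, hξ_pos, hξ⟩ := stmt17_general (QF + Matrix.diagonal βF) hM
  exact ⟨ξ, hξ_anti, hξ_pos (Fin.last m), hξ⟩
end
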